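/- arXiv:0807.3250 — 2 statements merged into one kernel-verified Lean document; each statement's English description precedes it below -/
import Mathlib

section
/- In H_{k⁺ⁱ}, for every α ≥ 0: ξ^α = (−1)^α Σ_{f=0}^{α} ψ(x(₊ᵢk)_{i+1,α−f}) · φ(x̄(k)_{i+1,f}) and ξ^α = (−1)^α Σ_{g=0}^{α} ψ(x̄(₊ᵢk)_{i,α−g}) · φ(x(k)_{i,g}). -/
/-!
Cohomology rings of `n`-step partial flag varieties, following
Khovanov–Lauda, "A diagrammatic approach to categorification of quantum groups III",
Section 5 (Iterated flag varieties).
-/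

open MvPolynomial Finset TensorProduct

noncomputable section

variable (𝕜 : Type) [Field 𝕜]

/-- The generator `x(k)_{j,α}` of `H_k` (with the conventions `x(k)_{j,0} = 1` and
`x(k)_{j,α} = 0` for `j` or `α` out of range), at the level of the ambient polynomial ring. -/
def xp (n : ℕ) (k : ℕ → ℕ) (j α : ℕ) : MvPolynomial (ℕ × ℕ) 𝕜 :=
  if α = 0 then 1 else if 1 ≤ j ∧ j ≤ n ∧ α ≤ k j - k (j - 1) then X (j, α) else 0

/-- The degree `2d` part of the defining relation of `H_k`: the sum over all tuples
`(α_1, …, α_n)` with `α_1 + ⋯ + α_n = d` of the products `x(k)_{1,α_1} ⋯ x(k)_{n,α_n}`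
(out-of-range tuples contribute `0`). -/
def relPoly (n : ℕ) (k : ℕ → ℕ) (d : ℕ) : MvPolynomial (ℕ × ℕ) 𝕜 :=
  ∑ t ∈ Finset.Nat.antidiagonalTuple n d, ∏ j : Fin n, xp 𝕜 n k ((j : ℕ) + 1) (t j)

/-- The pairs `(j, α)` indexing the actual generators of `H_k`. -/
def InRangeK (n : ℕ) (k : ℕ → ℕ) (j α : ℕ) : Prop :=
  1 ≤ j ∧ j ≤ n ∧ 1 ≤ α ∧ α ≤ k j - k (j - 1)

/-- The defining ideal of `H_k`: the relations `relPoly` for every `d ≥ 1`, together with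
all the irrelevant variables of the ambient polynomial ring. -/
def relIdealK (n : ℕ) (k : ℕ → ℕ) : Ideal (MvPolynomial (ℕ × ℕ) 𝕜) :=
  Ideal.span ({p | ∃ d, 1 ≤ d ∧ p = relPoly 𝕜 n k d} ∪
    {p | ∃ j α : ℕ, ¬ InRangeK n k j α ∧ p = X (j, α)})

/-- The cohomology ring `H_k` of the `n`-step flag variety `Fl(k)`. -/
abbrev HK (n : ℕ) (k : ℕ → ℕ) : Type := MvPolynomial (ℕ × ℕ) 𝕜 ⧸ relIdealK 𝕜 n k

/-- The generator `x(k)_{j,α} ∈ H_k` (with conventions). -/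
def xK (n : ℕ) (k : ℕ → ℕ) (j α : ℕ) : HK 𝕜 n k :=
  Ideal.Quotient.mk (relIdealK 𝕜 n k) (xp 𝕜 n k j α)

open Classical in
/-- The dual generator `x̄(k)_{j,α}`: the sum over all tuples `(α_ℓ)_{ℓ ≠ j}` with
`∑_{ℓ ≠ j} α_ℓ = α` of the products `∏_{ℓ ≠ j} x(k)_{ℓ,α_ℓ}`, at the polynomial level. -/
def xbarp (n : ℕ) (k : ℕ → ℕ) (j α : ℕ) : MvPolynomial (ℕ × ℕ) 𝕜 :=
  ∑ t ∈ Finset.Nat.antidiagonalTuple n α,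
    if ∀ ℓ : Fin n, (ℓ : ℕ) + 1 = j → t ℓ = 0 then
      ∏ ℓ : Fin n, xp 𝕜 n k ((ℓ : ℕ) + 1) (t ℓ)
    else 0

/-- The dual generator `x̄(k)_{j,α} ∈ H_k`. -/
def xbarK (n : ℕ) (k : ℕ → ℕ) (j α : ℕ) : HK 𝕜 n k :=
  Ideal.Quotient.mk (relIdealK 𝕜 n k) (xbarp 𝕜 n k j α)

/-- The dual generator with an integer index, with `x̄(k)_{j,α} = 0` for `α < 0`. -/
def xbarKZ (n : ℕ) (k : ℕ → ℕ) (j : ℕ) (α : ℤ) : HK 𝕜 n k :=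
  if 0 ≤ α then xbarK 𝕜 n k j α.toNat else 0

/-- The sequence `₊ᵢk`, obtained from `k` by replacing `k i` with `k i + 1`. -/
def kup (k : ℕ → ℕ) (i : ℕ) : ℕ → ℕ := fun j => if j = i then k i + 1 else k j

/-- The pairs `(j, α)` indexing the actual generators of `H_{k⁺ⁱ}`:
`ξ` is the variable `(0, 1)`, the `x_{j,α}` (`j ≠ i+1`) are the variables `(j, α)`, and
the `x'_{i+1,α}` are the variables `(i+1, α)`. -/
def InRangeKi (n : ℕ) (k : ℕ → ℕ) (i j α : ℕ) : Prop :=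
  (j = 0 ∧ α = 1) ∨
  (1 ≤ j ∧ j ≤ n ∧ j ≠ i + 1 ∧ 1 ≤ α ∧ α ≤ k j - k (j - 1)) ∨
  (j = i + 1 ∧ 1 ≤ α ∧ α ≤ k (i + 1) - k i - 1)

/-- The generator `x_{j,α}` (for `j ≠ i + 1`) of `H_{k⁺ⁱ}`, with conventions,
at the polynomial level. -/
def yp (n : ℕ) (k : ℕ → ℕ) (i j α : ℕ) : MvPolynomial (ℕ × ℕ) 𝕜 :=
  if α = 0 then 1
  else if 1 ≤ j ∧ j ≤ n ∧ j ≠ i + 1 ∧ α ≤ k j - k (j - 1) then X (j, α) else 0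

/-- The generator `x'_{i+1,α}` of `H_{k⁺ⁱ}`, with conventions, at the polynomial level. -/
def y'p (n : ℕ) (k : ℕ → ℕ) (i α : ℕ) : MvPolynomial (ℕ × ℕ) 𝕜 :=
  if α = 0 then 1 else if α ≤ k (i + 1) - k i - 1 then X (i + 1, α) else 0

/-- The coefficient of `t^α` in the `j`-th factor of the generating series
`(1 + ξt) ⬝ (∑_α x'_{i+1,α} t^α) ⬝ ∏_{j ≠ i+1} (∑_α x_{j,α} t^α)` defining `H_{k⁺ⁱ}`;
the factor `j = 0` is `1 + ξ t`. -/
def fp (n : ℕ) (k : ℕ → ℕ) (i j α : ℕ) : MvPolynomial (ℕ × ℕ) 𝕜 :=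
  if j = 0 then (if α = 0 then 1 else if α = 1 then X (0, 1) else 0)
  else if j = i + 1 then y'p 𝕜 n k i α
  else yp 𝕜 n k i j α

/-- The coefficient of `t^d` in
`(1 + ξt) ⬝ (∑_α x'_{i+1,α} t^α) ⬝ ∏_{j ≠ i+1} (∑_α x_{j,α} t^α)`. -/
def relPolyKi (n : ℕ) (k : ℕ → ℕ) (i d : ℕ) : MvPolynomial (ℕ × ℕ) 𝕜 :=
  ∑ t ∈ Finset.Nat.antidiagonalTuple (n + 1) d, ∏ j : Fin (n + 1), fp 𝕜 n k i (j : ℕ) (t j)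

/-- The defining ideal of `H_{k⁺ⁱ}`. -/
def relIdealKi (n : ℕ) (k : ℕ → ℕ) (i : ℕ) : Ideal (MvPolynomial (ℕ × ℕ) 𝕜) :=
  Ideal.span ({p | ∃ d, 1 ≤ d ∧ p = relPolyKi 𝕜 n k i d} ∪
    {p | ∃ j α : ℕ, ¬ InRangeKi n k i j α ∧ p = X (j, α)})

/-- The cohomology ring `H_{k⁺ⁱ}` of the `(n+1)`-step flag variety `Fl(k⁺ⁱ)`. -/
abbrev HKi (n : ℕ) (k : ℕ → ℕ) (i : ℕ) : Type := MvPolynomial (ℕ × ℕ) 𝕜 ⧸ relIdealKi 𝕜 n k i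

/-- The degree `2` generator `ξ ∈ H_{k⁺ⁱ}`. -/
def xiK (n : ℕ) (k : ℕ → ℕ) (i : ℕ) : HKi 𝕜 n k i :=
  Ideal.Quotient.mk (relIdealKi 𝕜 n k i) (X (0, 1))

/-- The generator `x_{j,α} ∈ H_{k⁺ⁱ}` (for `j ≠ i + 1`), with conventions. -/
def yK (n : ℕ) (k : ℕ → ℕ) (i j α : ℕ) : HKi 𝕜 n k i :=
  Ideal.Quotient.mk (relIdealKi 𝕜 n k i) (yp 𝕜 n k i j α)

/-- The generator `x'_{i+1,α} ∈ H_{k⁺ⁱ}`, with conventions. -/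
def y'K (n : ℕ) (k : ℕ → ℕ) (i α : ℕ) : HKi 𝕜 n k i :=
  Ideal.Quotient.mk (relIdealKi 𝕜 n k i) (y'p 𝕜 n k i α)

/-- `φ : H_k → H_{k⁺ⁱ}` is the algebra homomorphism determined by
`φ(x(k)_{j,α}) = x_{j,α}` for `j ≠ i+1` and
`φ(x(k)_{i+1,α}) = ξ·x'_{i+1,α-1} + x'_{i+1,α}`. -/
def IsPhi (n : ℕ) (k : ℕ → ℕ) (i : ℕ) (φ : HK 𝕜 n k →ₐ[𝕜] HKi 𝕜 n k i) : Prop :=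
  (∀ j α : ℕ, j ≠ i + 1 → φ (xK 𝕜 n k j α) = yK 𝕜 n k i j α) ∧
  (∀ α : ℕ, 1 ≤ α → φ (xK 𝕜 n k (i + 1) α) =
    xiK 𝕜 n k i * y'K 𝕜 n k i (α - 1) + y'K 𝕜 n k i α)

/-- `ψ : H_{₊ᵢk} → H_{k⁺ⁱ}` is the algebra homomorphism determined by
`ψ(x(₊ᵢk)_{j,α}) = x_{j,α}` for `j ≠ i, i+1`, `ψ(x(₊ᵢk)_{i+1,α}) = x'_{i+1,α}`, and
`ψ(x(₊ᵢk)_{i,α}) = ξ·x_{i,α-1} + x_{i,α}`. -/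
def IsPsi (n : ℕ) (k : ℕ → ℕ) (i : ℕ) (ψ : HK 𝕜 n (kup k i) →ₐ[𝕜] HKi 𝕜 n k i) : Prop :=
  (∀ j α : ℕ, j ≠ i → j ≠ i + 1 → ψ (xK 𝕜 n (kup k i) j α) = yK 𝕜 n k i j α) ∧
  (∀ α : ℕ, ψ (xK 𝕜 n (kup k i) (i + 1) α) = y'K 𝕜 n k i α) ∧
  (∀ α : ℕ, 1 ≤ α → ψ (xK 𝕜 n (kup k i) i α) =
    xiK 𝕜 n k i * yK 𝕜 n k i i (α - 1) + yK 𝕜 n k i i α)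

/-- The degree `2d` homogeneous component of a quotient of the polynomial ring, where the
variable `(j, α)` has degree `2α`. -/
def qgrade (I : Ideal (MvPolynomial (ℕ × ℕ) 𝕜)) (d : ℕ) :
    Submodule 𝕜 (MvPolynomial (ℕ × ℕ) 𝕜 ⧸ I) :=
  Submodule.map (Ideal.Quotient.mkₐ 𝕜 I).toLinearMap
    (weightedHomogeneousSubmodule 𝕜 (fun v : ℕ × ℕ => 2 * v.2) d)

end

section Statements

variable (𝕜 : Type) [Field 𝕜]

/-!
Work with the generating series `x_j(t) = ∑ x_{j,α} t^α` and `x̄_j(t) = ∑ x̄_{j,α} t^α`. By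
definition `x̄_j(t) = ∏_{l ≠ j} x_l(t)`, and the relations of `H_{k⁺ⁱ}` say that `1 + ξt` is inverse
to the product `P(t)` of the remaining factors `x_l(t)`, `l ≠ i + 1`, and `x'_{i+1}(t)`. Now `φ`
identifies every factor of `P(t)` with a generating series of `H_k` except the one at `l = i + 1`,
and `ψ` identifies every factor with one of `H_{₊ᵢk}` except the one at `l = i`. Hence
`P = ψ(x_{i+1}) φ(x̄_{i+1}) = ψ(x̄_i) φ(x_i)`, and comparing coefficients in `P(t) = (1 + ξt)⁻¹`
gives both formulas.
-/

open scoped PowerSeries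

theorem piAntidiag_erase {ι μ : Type*} [DecidableEq ι] [AddCommMonoid μ] [DecidableEq μ]
    [HasAntidiagonal μ] (s : Finset ι) (m : ι) (d : μ) :
    (s.erase m).piAntidiag d = {t ∈ s.piAntidiag d | t m = 0} := by
  ext t
  have hsum (ht : t m = 0) : ∑ l ∈ s.erase m, t l = ∑ l ∈ s, t l := sum_erase s ht
  simp only [mem_piAntidiag, mem_filter, mem_erase]
  grind

theorem coeff_prod_eq_sum_piAntidiag {ι A : Type*} [DecidableEq ι] [CommSemiring A]
    (s : Finset ι) (F : ι → A⟦X⟧) (d : ℕ) :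
    PowerSeries.coeff d (∏ j ∈ s, F j) =
      ∑ t ∈ s.piAntidiag d, ∏ j ∈ s, PowerSeries.coeff (t j) (F j) := by
  rw [PowerSeries.coeff_prod, finsuppAntidiag, sum_map, ← sum_attach (s.piAntidiag d)]
  rfl

theorem coeff_mul_eq_sum_range {A : Type*} [Semiring A] (F G : A⟦X⟧) (d : ℕ) :
    PowerSeries.coeff d (F * G) =
      ∑ b ∈ range (d + 1), PowerSeries.coeff (d - b) F * PowerSeries.coeff b G := by
  rw [PowerSeries.coeff_mul, ← Finset.Nat.sum_antidiagonal_swap]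
  exact Finset.Nat.sum_antidiagonal_eq_sum_range_succ
    (fun b a => PowerSeries.coeff a F * PowerSeries.coeff b G) d

theorem coeff_eq_neg_pow_of_one_add_C_mul_X_mul_eq_one {A : Type*} [Ring A] {x : A} {S : A⟦X⟧}
    (hS : (1 + PowerSeries.C x * PowerSeries.X) * S = 1) (d : ℕ) :
    PowerSeries.coeff d S = (-x) ^ d := by
  have hS' : S + PowerSeries.C x * (PowerSeries.X * S) = 1 := by
    rwa [add_mul, one_mul, mul_assoc] at hS
  induction d with
  | zero => simpa using congrArg (PowerSeries.coeff 0) hS'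
  | succ d ih =>
    have hcoeff : PowerSeries.coeff (d + 1) S + x * PowerSeries.coeff d S = 0 := by
      simpa [PowerSeries.coeff_one, PowerSeries.coeff_succ_X_mul] using
        congrArg (PowerSeries.coeff (d + 1)) hS'
    rw [eq_neg_of_add_eq_zero_left hcoeff, ih, pow_succ', neg_mul]

theorem pow_eq_neg_one_pow_mul_coeff_of_one_add_C_mul_X_mul_eq_one {A : Type*} [Ring A] {x : A}
    {S : A⟦X⟧} (hS : (1 + PowerSeries.C x * PowerSeries.X) * S = 1) (d : ℕ) :
    x ^ d = (-1) ^ d * PowerSeries.coeff d S := by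
  rw [coeff_eq_neg_pow_of_one_add_C_mul_X_mul_eq_one hS, ← neg_pow, neg_neg]

section GeneratingSeries

variable {𝕜} {n : ℕ} {k : ℕ → ℕ} {i : ℕ}

variable (𝕜 n k) in
/-- The generating series `∑ x(k)_{j,α} t^α` over `H_k` of the generators. -/
noncomputable def xSeries (j : ℕ) : (HK 𝕜 n k)⟦X⟧ :=
  PowerSeries.mk (xK 𝕜 n k j)

variable (𝕜 n k) in
/-- The generating series `∑ x̄(k)_{j,α} t^α` over `H_k` of the dual generators. -/
noncomputable def xbarSeries (j : ℕ) : (HK 𝕜 n k)⟦X⟧ :=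
  PowerSeries.mk (xbarK 𝕜 n k j)

variable (𝕜 n k i) in
/-- The `j`-th factor of the generating series of the relations of `H_{k⁺ⁱ}`: it is `1 + ξt` for
`j = 0`, `∑ x'_{i+1,α} t^α` for `j = i + 1` and `∑ x_{j,α} t^α` otherwise. -/
noncomputable def factorSeries (j : ℕ) : (HKi 𝕜 n k i)⟦X⟧ :=
  PowerSeries.mk fun α => Ideal.Quotient.mk (relIdealKi 𝕜 n k i) (fp 𝕜 n k i j α)

theorem xbarSeries_succ (m : Fin n) :
    xbarSeries 𝕜 n k (m + 1) = ∏ l ∈ univ.erase m, xSeries 𝕜 n k (l + 1) := by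
  ext d
  have hcond (t : Fin n → ℕ) : (∀ l : Fin n, (l : ℕ) + 1 = m + 1 → t l = 0) ↔ t m = 0 := by
    simp [Fin.val_inj]
  have hprod {t : Fin n → ℕ} (ht : t m = 0) : ∏ l : Fin n, xp 𝕜 n k (l + 1) (t l) =
      ∏ l ∈ univ.erase m, xp 𝕜 n k (l + 1) (t l) := by
    rw [← mul_prod_erase univ _ (mem_univ m), ht, xp, if_pos rfl, one_mul]
  simp only [coeff_prod_eq_sum_piAntidiag, piAntidiag_erase,
    piAntidiag_univ_fin_eq_antidiagonalTuple, xbarSeries, xSeries, PowerSeries.coeff_mk, xbarK, xK,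
    xbarp, hcond, ← sum_filter, map_sum, ← map_prod]
  exact sum_congr rfl fun t ht => congrArg _ (hprod (mem_filter.mp ht).2)

theorem mul_map_xbarSeries_eq_prod {A : Type*} [CommSemiring A] (f : HK 𝕜 n k →+* A) {F : ℕ → A⟦X⟧}
    {j : ℕ} (hj : j ≠ 0) (hjn : j ≤ n)
    (hF : ∀ l, l ≠ 0 → l ≠ j → (xSeries 𝕜 n k l).map f = F l) :
    F j * (xbarSeries 𝕜 n k j).map f = ∏ l : Fin n, F (l + 1) := by
  obtain ⟨m, rfl⟩ : ∃ m : Fin n, (m : ℕ) + 1 = j := ⟨⟨j - 1, by omega⟩, Nat.succ_pred hj⟩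
  rw [xbarSeries_succ, map_prod, ← mul_prod_erase univ _ (mem_univ m)]
  congr 1
  refine prod_congr rfl fun l hl => hF _ l.val.succ_ne_zero fun h => ?_
  exact ne_of_mem_erase hl (Fin.ext (Nat.succ_injective h))

theorem factorSeries_zero :
    factorSeries 𝕜 n k i 0 = 1 + PowerSeries.C (xiK 𝕜 n k i) * PowerSeries.X := by
  ext (_ | _ | d) <;> simp [factorSeries, fp, xiK, PowerSeries.coeff_one]

theorem factorSeries_succ_self :
    factorSeries 𝕜 n k i (i + 1) = PowerSeries.mk (y'K 𝕜 n k i) := by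
  ext d
  simp [factorSeries, fp, y'K]

theorem factorSeries_of_ne {j : ℕ} (hj : j ≠ 0) (hji : j ≠ i + 1) :
    factorSeries 𝕜 n k i j = PowerSeries.mk (yK 𝕜 n k i j) := by
  ext d
  simp [factorSeries, fp, yK, hj, hji]

theorem mk_relPolyKi_eq_zero {d : ℕ} (hd : d ≠ 0) :
    Ideal.Quotient.mk (relIdealKi 𝕜 n k i) (relPolyKi 𝕜 n k i d) = 0 :=
  Ideal.Quotient.eq_zero_iff_mem.mpr <|
    Ideal.subset_span <| Or.inl ⟨d, Nat.one_le_iff_ne_zero.mpr hd, rfl⟩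

theorem relPolyKi_zero : relPolyKi 𝕜 n k i 0 = 1 := by
  simp [relPolyKi, Finset.Nat.antidiagonalTuple_zero_right, fp, y'p, yp]

theorem prod_factorSeries : ∏ j : Fin (n + 1), factorSeries 𝕜 n k i j = 1 := by
  ext d
  have hcoeff : PowerSeries.coeff d (∏ j : Fin (n + 1), factorSeries 𝕜 n k i j) =
      Ideal.Quotient.mk (relIdealKi 𝕜 n k i) (relPolyKi 𝕜 n k i d) := by
    simp [coeff_prod_eq_sum_piAntidiag, piAntidiag_univ_fin_eq_antidiagonalTuple, factorSeries,
      relPolyKi]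
  rw [hcoeff, PowerSeries.coeff_one]
  split_ifs with hd
  · rw [hd, relPolyKi_zero, map_one]
  · exact mk_relPolyKi_eq_zero hd

theorem xiK_pow_eq_coeff_prod_factorSeries (α : ℕ) :
    xiK 𝕜 n k i ^ α =
      (-1) ^ α * PowerSeries.coeff α (∏ l : Fin n, factorSeries 𝕜 n k i (l + 1)) := by
  have hinv : (1 + PowerSeries.C (xiK 𝕜 n k i) * PowerSeries.X) *
      ∏ l : Fin n, factorSeries 𝕜 n k i (l + 1) = 1 := by
    simpa [Fin.prod_univ_succ, factorSeries_zero] using prod_factorSeries (𝕜 := 𝕜)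
  exact pow_eq_neg_one_pow_mul_coeff_of_one_add_C_mul_X_mul_eq_one hinv α

theorem IsPhi.map_xSeries {φ : HK 𝕜 n k →ₐ[𝕜] HKi 𝕜 n k i} (hφ : IsPhi 𝕜 n k i φ) {j : ℕ}
    (hj : j ≠ 0) (hji : j ≠ i + 1) :
    (xSeries 𝕜 n k j).map (φ : HK 𝕜 n k →+* HKi 𝕜 n k i) = factorSeries 𝕜 n k i j := by
  rw [factorSeries_of_ne hj hji]
  ext α
  simpa [xSeries] using hφ.1 j α hji

theorem IsPsi.map_xSeries {ψ : HK 𝕜 n (kup k i) →ₐ[𝕜] HKi 𝕜 n k i} (hψ : IsPsi 𝕜 n k i ψ) {j : ℕ}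
    (hj : j ≠ 0) (hji : j ≠ i) :
    (xSeries 𝕜 n (kup k i) j).map (ψ : HK 𝕜 n (kup k i) →+* HKi 𝕜 n k i) =
      factorSeries 𝕜 n k i j := by
  rcases eq_or_ne j (i + 1) with rfl | hji'
  · rw [factorSeries_succ_self]
    ext α
    simpa [xSeries] using hψ.2.1 α
  · rw [factorSeries_of_ne hj hji']
    ext α
    simpa [xSeries] using hψ.1 j α hji hji'

theorem map_xSeries_succ_mul_map_xbarSeries_succ {φ : HK 𝕜 n k →ₐ[𝕜] HKi 𝕜 n k i}
    (hφ : IsPhi 𝕜 n k i φ) {ψ : HK 𝕜 n (kup k i) →ₐ[𝕜] HKi 𝕜 n k i} (hψ : IsPsi 𝕜 n k i ψ)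
    (hin : i + 1 ≤ n) :
    (xSeries 𝕜 n (kup k i) (i + 1)).map (ψ : HK 𝕜 n (kup k i) →+* HKi 𝕜 n k i) *
        (xbarSeries 𝕜 n k (i + 1)).map (φ : HK 𝕜 n k →+* HKi 𝕜 n k i) =
      ∏ l : Fin n, factorSeries 𝕜 n k i (l + 1) := by
  rw [hψ.map_xSeries i.succ_ne_zero i.succ_ne_self]
  exact mul_map_xbarSeries_eq_prod _ i.succ_ne_zero hin fun _ => hφ.map_xSeries

theorem map_xbarSeries_mul_map_xSeries {φ : HK 𝕜 n k →ₐ[𝕜] HKi 𝕜 n k i}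
    (hφ : IsPhi 𝕜 n k i φ) {ψ : HK 𝕜 n (kup k i) →ₐ[𝕜] HKi 𝕜 n k i} (hψ : IsPsi 𝕜 n k i ψ)
    (hi : i ≠ 0) (hin : i ≤ n) :
    (xbarSeries 𝕜 n (kup k i) i).map (ψ : HK 𝕜 n (kup k i) →+* HKi 𝕜 n k i) *
        (xSeries 𝕜 n k i).map (φ : HK 𝕜 n k →+* HKi 𝕜 n k i) =
      ∏ l : Fin n, factorSeries 𝕜 n k i (l + 1) := by
  rw [hφ.map_xSeries hi i.succ_ne_self.symm, mul_comm]
  exact mul_map_xbarSeries_eq_prod _ hi hin fun _ => hψ.map_xSeries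

end GeneratingSeries

theorem stmt3 (n N i : ℕ) (k : ℕ → ℕ)
    (hn : 1 ≤ n) (hk0 : k 0 = 0) (hkN : k n = N) (hmono : ∀ j, j < n → k j ≤ k (j + 1))
    (hi1 : 1 ≤ i) (hin : i + 1 ≤ n) (hik : k i < k (i + 1))
    (φ : HK 𝕜 n k →ₐ[𝕜] HKi 𝕜 n k i) (hφ : IsPhi 𝕜 n k i φ)
    (ψ : HK 𝕜 n (kup k i) →ₐ[𝕜] HKi 𝕜 n k i) (hψ : IsPsi 𝕜 n k i ψ) :
    ∀ α : ℕ,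
      xiK 𝕜 n k i ^ α = (-1 : HKi 𝕜 n k i) ^ α *
        ∑ f ∈ Finset.range (α + 1),
          ψ (xK 𝕜 n (kup k i) (i + 1) (α - f)) * φ (xbarK 𝕜 n k (i + 1) f) ∧
      xiK 𝕜 n k i ^ α = (-1 : HKi 𝕜 n k i) ^ α *
        ∑ g ∈ Finset.range (α + 1),
          ψ (xbarK 𝕜 n (kup k i) i (α - g)) * φ (xK 𝕜 n k i g) := by
  intro α
  rw [xiK_pow_eq_coeff_prod_factorSeries]
  constructor
  · rw [← map_xSeries_succ_mul_map_xbarSeries_succ hφ hψ hin, coeff_mul_eq_sum_range]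
    simp [xSeries, xbarSeries]
  · rw [← map_xbarSeries_mul_map_xSeries hφ hψ (Nat.one_le_iff_ne_zero.mp hi1)
      (Nat.le_of_succ_le hin), coeff_mul_eq_sum_range]
    simp [xSeries, xbarSeries]

end Statements
end

section
/- In H_{k⁺ⁱ}, for every β ≥ 0 the complete symmetric combinations in the i-th and (i+1)-st groups of variables slide across the two inclusions: Σ_{f=0}^{β} φ(x(k)_{i,f} · x(k)_{i+1,β−f}) = Σ_{f=0}^{β} ψ(x(₊ᵢk)_{i,f} · x(₊ᵢk)_{i+1,β−f}). -/
/-!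
Cohomology rings of `n`-step partial flag varieties, following
Khovanov–Lauda, "A diagrammatic approach to categorification of quantum groups III",
Section 5 (Iterated flag varieties).
-/

open MvPolynomial Finset TensorProduct

section Statements

variable (𝕜 : Type) [Field 𝕜]

/-!
Collect the generators of each group into a power series in `t`. Then `φ` multiplies the
`(i+1)`-st series by `1 + ξt` and fixes the `i`-th, whereas `ψ` multiplies the `i`-th by `1 + ξt`
and fixes the `(i+1)`-st, so both products are `(1 + ξt)(∑ x_{i,α} t^α)(∑ x'_{i+1,α} t^α)`.
-/

section GeneratingSeries

variable {R : Type*} [CommSemiring R]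

theorem coeff_mk_mul_mk (a b : ℕ → R) (β : ℕ) :
    PowerSeries.coeff β (PowerSeries.mk a * PowerSeries.mk b) =
      ∑ f ∈ range (β + 1), a f * b (β - f) := by
  simp only [PowerSeries.coeff_mul, PowerSeries.coeff_mk,
    Nat.sum_antidiagonal_eq_sum_range_succ fun f g => a f * b g]

theorem mk_eq_one_add_C_mul_X_mul_mk {a b : ℕ → R} {ξ : R} (zero : b 0 = a 0)
    (succ : ∀ m, b (m + 1) = ξ * a m + a (m + 1)) :
    PowerSeries.mk b = (1 + PowerSeries.C ξ * PowerSeries.X) * PowerSeries.mk a := by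
  ext (_ | m)
  · simp [add_mul, mul_assoc, zero]
  · simp [add_mul, mul_assoc, PowerSeries.coeff_succ_X_mul, succ, add_comm]

end GeneratingSeries

section Generators

variable (n : ℕ) (k : ℕ → ℕ)

theorem xK_zero (j : ℕ) : xK 𝕜 n k j 0 = 1 := by simp [xK, xp]

theorem yK_zero (i j : ℕ) : yK 𝕜 n k i j 0 = 1 := by simp [yK, yp]

theorem y'K_zero (i : ℕ) : y'K 𝕜 n k i 0 = 1 := by simp [y'K, y'p]

end Generators

section Inclusions

variable {𝕜} {n i : ℕ} {k : ℕ → ℕ}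
  {φ : HK 𝕜 n k →ₐ[𝕜] HKi 𝕜 n k i} {ψ : HK 𝕜 n (kup k i) →ₐ[𝕜] HKi 𝕜 n k i}

theorem IsPhi.map_xK_of_ne (hφ : IsPhi 𝕜 n k i φ) {j : ℕ} (hj : j ≠ i + 1) (α : ℕ) :
    φ (xK 𝕜 n k j α) = yK 𝕜 n k i j α :=
  hφ.1 j α hj

theorem IsPhi.mk_map_xK_succ (hφ : IsPhi 𝕜 n k i φ) :
    PowerSeries.mk (fun α => φ (xK 𝕜 n k (i + 1) α)) =
      (1 + PowerSeries.C (xiK 𝕜 n k i) * PowerSeries.X) * PowerSeries.mk (y'K 𝕜 n k i) :=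
  mk_eq_one_add_C_mul_X_mul_mk (by rw [xK_zero, map_one, y'K_zero])
    fun m => hφ.2 (m + 1) m.succ_pos

theorem IsPsi.map_xK_succ (hψ : IsPsi 𝕜 n k i ψ) (α : ℕ) :
    ψ (xK 𝕜 n (kup k i) (i + 1) α) = y'K 𝕜 n k i α :=
  hψ.2.1 α

theorem IsPsi.mk_map_xK_self (hψ : IsPsi 𝕜 n k i ψ) :
    PowerSeries.mk (fun α => ψ (xK 𝕜 n (kup k i) i α)) =
      (1 + PowerSeries.C (xiK 𝕜 n k i) * PowerSeries.X) * PowerSeries.mk (yK 𝕜 n k i i) :=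
  mk_eq_one_add_C_mul_X_mul_mk (by rw [xK_zero, map_one, yK_zero])
    fun m => hψ.2.2 (m + 1) m.succ_pos

theorem mk_map_xK_mul_mk_map_xK_succ_eq (hφ : IsPhi 𝕜 n k i φ) (hψ : IsPsi 𝕜 n k i ψ) :
    PowerSeries.mk (fun α => φ (xK 𝕜 n k i α)) *
        PowerSeries.mk (fun α => φ (xK 𝕜 n k (i + 1) α)) =
      PowerSeries.mk (fun α => ψ (xK 𝕜 n (kup k i) i α)) *
        PowerSeries.mk (fun α => ψ (xK 𝕜 n (kup k i) (i + 1) α)) := by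
  simp only [hφ.map_xK_of_ne i.succ_ne_self.symm, hψ.map_xK_succ]
  rw [hφ.mk_map_xK_succ, hψ.mk_map_xK_self, mul_left_comm, mul_assoc]

end Inclusions

theorem stmt4 (n N i : ℕ) (k : ℕ → ℕ)
    (hn : 1 ≤ n) (hk0 : k 0 = 0) (hkN : k n = N) (hmono : ∀ j, j < n → k j ≤ k (j + 1))
    (hi1 : 1 ≤ i) (hin : i + 1 ≤ n) (hik : k i < k (i + 1))
    (φ : HK 𝕜 n k →ₐ[𝕜] HKi 𝕜 n k i) (hφ : IsPhi 𝕜 n k i φ)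
    (ψ : HK 𝕜 n (kup k i) →ₐ[𝕜] HKi 𝕜 n k i) (hψ : IsPsi 𝕜 n k i ψ) :
    ∀ β : ℕ,
      ∑ f ∈ Finset.range (β + 1), φ (xK 𝕜 n k i f * xK 𝕜 n k (i + 1) (β - f)) =
      ∑ f ∈ Finset.range (β + 1),
        ψ (xK 𝕜 n (kup k i) i f * xK 𝕜 n (kup k i) (i + 1) (β - f)) := by
  intro β
  simpa only [map_mul, coeff_mk_mul_mk] using
    congrArg (PowerSeries.coeff β) (mk_map_xK_mul_mk_map_xK_succ_eq hφ hψ)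

end Statements
end
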